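/- Let f : ℝ → ℝ be a Schwartz function. Then lim_{ℓ → 0⁺} ℓ^{−3} ∫_{ℝ} ∫_{ℝ} (f(x + y) − f(x))² / (cosh(y/ℓ) − 1) dx dy = (4π²/3) ∫_{ℝ} f′(x)² dx. -/

import Mathlib

open Real MeasureTheory Filter

/-- Lambert-type series for `1 / (cosh u - 1)` on the positive half-line. -/
lemma hasSum_mul_exp_neg_eq_one_div_cosh_sub_one {u : ℝ} (hu : 0 < u) :
    HasSum (fun n : ℕ => 2 * (n : ℝ) * Real.exp (-(n * u))) (1 / (Real.cosh u - 1)) := by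
  have hr : Real.exp (-u) < 1 := by rw [Real.exp_lt_one_iff]; linarith
  have hpos := Real.exp_pos (-u)
  have h := (hasSum_coe_mul_geometric_of_norm_lt_one (r := Real.exp (-u))
    (by rw [Real.norm_of_nonneg hpos.le]; exact hr)).mul_left 2
  have hval : 2 * (Real.exp (-u) / (1 - Real.exp (-u)) ^ 2) = 1 / (Real.cosh u - 1) := by
    have hinv : Real.exp u = (Real.exp (-u))⁻¹ := by rw [Real.exp_neg, inv_inv]
    have hcosh : Real.cosh u - 1 = (1 - Real.exp (-u)) ^ 2 / (2 * Real.exp (-u)) := by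
      rw [Real.cosh_eq, hinv]
      field_simp
      ring
    rw [hcosh, one_div_div]
    ring
  rw [hval] at h
  refine (funext fun n => ?_ : (fun n : ℕ => 2 * (n : ℝ) * Real.exp (-(n * u))) = _) ▸ h
  rw [← Real.exp_nat_mul, mul_neg, mul_assoc]

lemma integral_sq_mul_exp_neg_mul_Ioi {r : ℝ} (hr : 0 < r) :
    ∫ u in Set.Ioi (0 : ℝ), u ^ 2 * Real.exp (-(r * u)) = 2 / r ^ 3 := by
  have h := Real.integral_rpow_mul_exp_neg_mul_Ioi (a := 3) (by norm_num) hr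
  have hG : Real.Gamma 3 = 2 := by simp
  rw [hG] at h
  norm_num at h
  rw [h]
  norm_cast
  field_simp

lemma integral_sq_div_cosh_sub_one_Ioi :
    ∫ u in Set.Ioi (0 : ℝ), u ^ 2 / (Real.cosh u - 1) = 2 * π ^ 2 / 3 := by
  let F : ℕ → ℝ → ℝ := fun n u => 2 * (n : ℝ) * (u ^ 2 * Real.exp (-(n * u)))
  have hF : ∀ n, ∫ u in Set.Ioi (0 : ℝ), F n u = 4 * (1 / (n : ℝ) ^ 2) := by
    intro n
    rcases Nat.eq_zero_or_pos n with rfl | hn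
    · simp [F]
    · have hn' : (0 : ℝ) < n := by exact_mod_cast hn
      simp only [F]
      rw [integral_const_mul, integral_sq_mul_exp_neg_mul_Ioi hn']
      field_simp
      norm_num
  have hint : ∀ n, IntegrableOn (F n) (Set.Ioi 0) := by
    intro n
    rcases Nat.eq_zero_or_pos n with rfl | hn
    · simp [F]
    · have hn' : (0 : ℝ) < n := by exact_mod_cast hn
      refine Integrable.of_integral_ne_zero ?_
      rw [hF]
      positivity
  have hnorm : ∀ n, ∫ u in Set.Ioi (0 : ℝ), ‖F n u‖ = 4 * (1 / (n : ℝ) ^ 2) := by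
    intro n
    rw [← hF n]
    refine integral_congr_ae (Eventually.of_forall fun u => ?_)
    exact Real.norm_of_nonneg (by positivity)
  have hsum : HasSum (fun n : ℕ => 4 * (1 / (n : ℝ) ^ 2)) (4 * (π ^ 2 / 6)) :=
    hasSum_zeta_two.mul_left 4
  have key := hasSum_integral_of_summable_integral_norm hint
    (by simp only [hnorm]; exact hsum.summable)
  simp only [hF] at key
  have hval := key.unique hsum
  have hcongr : ∫ u in Set.Ioi (0 : ℝ), u ^ 2 / (Real.cosh u - 1)
      = ∫ u in Set.Ioi (0 : ℝ), ∑' n, F n u := by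
    refine setIntegral_congr_fun measurableSet_Ioi fun u hu => ?_
    have := ((hasSum_mul_exp_neg_eq_one_div_cosh_sub_one hu).mul_left (u ^ 2)).tsum_eq
    simp only [F]
    rw [div_eq_mul_one_div, ← this]
    exact tsum_congr fun n => by ring
  rw [hcongr, hval]
  ring

lemma integral_sq_div_cosh_sub_one :
    ∫ u : ℝ, u ^ 2 / (Real.cosh u - 1) = 4 * π ^ 2 / 3 := by
  have h := integral_comp_abs (f := fun u : ℝ => u ^ 2 / (Real.cosh u - 1))
  simp only [sq_abs, Real.cosh_abs] at h
  rw [h, integral_sq_div_cosh_sub_one_Ioi]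
  ring

lemma integrable_sq_div_cosh_sub_one :
    Integrable (fun u : ℝ => u ^ 2 / (Real.cosh u - 1)) := by
  refine Integrable.of_integral_ne_zero ?_
  rw [integral_sq_div_cosh_sub_one]
  positivity

lemma integrable_one_add_abs_inv_sq :
    Integrable (fun x : ℝ => ((1 + |x|)⁻¹) ^ 2) := by
  have h := integrable_one_add_norm (E := ℝ) (μ := volume) (r := 2) (by simp)
  refine h.congr (Eventually.of_forall fun x => ?_)
  change (1 + ‖x‖) ^ (-2 : ℝ) = ((1 + |x|)⁻¹) ^ 2
  rw [Real.rpow_neg (by positivity), Real.norm_eq_abs, inv_pow]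
  norm_cast

namespace SchwartzMap

variable (f : SchwartzMap ℝ ℝ)

/-- Difference quotients with step at most one have a uniform integrable decay. -/
lemma exists_abs_sub_le_mul_one_add_abs_inv :
    ∃ C : ℝ, 0 ≤ C ∧ ∀ x y : ℝ, |y| ≤ 1 → |f (x + y) - f x| ≤ C * (1 + |x|)⁻¹ * |y| := by
  obtain ⟨C₀, hC₀⟩ := f.decay 0 1
  obtain ⟨C₁, hC₁⟩ := f.decay 1 1
  have hd : ∀ z, |deriv f z| * (1 + |z|) ≤ C₀ + C₁ := by
    intro z
    have h0 := hC₀.2 z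
    have h1 := hC₁.2 z
    rw [norm_iteratedFDeriv_eq_norm_iteratedDeriv, iteratedDeriv_one] at h0 h1
    simp only [Real.norm_eq_abs, pow_zero, pow_one, one_mul] at h0 h1
    nlinarith
  have hC : 0 ≤ C₀ + C₁ := le_trans (by positivity) (hd 0)
  refine ⟨2 * (C₀ + C₁), by positivity, fun x y hy => ?_⟩
  have hmv := (convex_segment (𝕜 := ℝ) x (x + y)).norm_image_sub_le_of_norm_deriv_le
    (f := f) (C := 2 * (C₀ + C₁) * (1 + |x|)⁻¹)
    (fun z _ => f.differentiableAt) (fun z hz => ?_)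
    (left_mem_segment ℝ x (x + y)) (right_mem_segment ℝ x (x + y))
  · simpa using hmv
  · have hzx : |x| ≤ |z| + 1 := by
      have h := norm_sub_le_of_mem_segment hz
      simp only [Real.norm_eq_abs, add_sub_cancel_left] at h
      have := abs_sub_abs_le_abs_sub x z
      rw [abs_sub_comm] at this
      linarith
    rw [← div_eq_mul_inv, le_div_iff₀ (by positivity), Real.norm_eq_abs]
    nlinarith [hd z, abs_nonneg (deriv f z), abs_nonneg z]

lemma integrable_sq : Integrable (fun x => f x ^ 2) :=
  (f.memLp 2).integrable_sq

/-- The squared `L²` modulus of continuity is bounded by a multiple of `y ^ 2`. -/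
lemma exists_integral_sub_sq_le :
    ∃ K : ℝ, ∀ y : ℝ, ∫ x, (f (x + y) - f x) ^ 2 ≤ K * y ^ 2 := by
  obtain ⟨C, hC0, hC⟩ := f.exists_abs_sub_le_mul_one_add_abs_inv
  have hI : 0 ≤ ∫ x : ℝ, ((1 + |x|)⁻¹) ^ 2 := integral_nonneg fun x => by positivity
  have hJ : 0 ≤ ∫ x : ℝ, f x ^ 2 := integral_nonneg fun x => by positivity
  refine ⟨C ^ 2 * (∫ x : ℝ, ((1 + |x|)⁻¹) ^ 2) + 4 * ∫ x, f x ^ 2, fun y => ?_⟩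
  rcases le_total |y| 1 with hy | hy
  · have hle : ∫ x, (f (x + y) - f x) ^ 2 ≤ ∫ x : ℝ, C ^ 2 * y ^ 2 * ((1 + |x|)⁻¹) ^ 2 := by
      refine integral_mono_of_nonneg (Eventually.of_forall fun x => sq_nonneg _)
        (integrable_one_add_abs_inv_sq.const_mul _) (Eventually.of_forall fun x => ?_)
      have h := pow_le_pow_left₀ (abs_nonneg _) (hC x y hy) 2
      simp only [sq_abs, mul_pow] at h
      simp only [inv_pow] at h ⊢
      linarith
    rw [integral_const_mul] at hle
    nlinarith [mul_nonneg hJ (sq_nonneg y)]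
  · have hle : ∫ x, (f (x + y) - f x) ^ 2 ≤ ∫ x : ℝ, (2 * f (x + y) ^ 2 + 2 * f x ^ 2) := by
      refine integral_mono_of_nonneg (Eventually.of_forall fun x => sq_nonneg _)
        (((f.integrable_sq.comp_add_right y).const_mul _).add (f.integrable_sq.const_mul _))
        (Eventually.of_forall fun x => ?_)
      change (f (x + y) - f x) ^ 2 ≤ 2 * f (x + y) ^ 2 + 2 * f x ^ 2
      nlinarith [sq_nonneg (f (x + y) + f x)]
    rw [integral_add ((f.integrable_sq.comp_add_right y).const_mul _)
      (f.integrable_sq.const_mul _), integral_const_mul, integral_const_mul,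
      integral_add_right_eq_self (fun x => f x ^ 2) y] at hle
    have hy2 : 1 ≤ y ^ 2 := by rw [← sq_abs]; nlinarith
    have h1 := mul_nonneg (mul_nonneg (sq_nonneg C) hI) (sq_nonneg y)
    nlinarith

lemma tendsto_integral_sub_sq_div :
    Tendsto (fun y => (∫ x, (f (x + y) - f x) ^ 2) / y ^ 2) (nhdsWithin 0 {0}ᶜ)
      (nhds (∫ x, (deriv f x) ^ 2)) := by
  obtain ⟨C, hC0, hC⟩ := f.exists_abs_sub_le_mul_one_add_abs_inv
  simp only [← integral_div]
  refine tendsto_integral_filter_of_dominated_convergence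
    (fun x => C ^ 2 * ((1 + |x|)⁻¹) ^ 2) (Eventually.of_forall fun y => ?_) ?_
    (integrable_one_add_abs_inv_sq.const_mul _) (Eventually.of_forall fun x => ?_)
  · have := f.continuous
    exact Continuous.aestronglyMeasurable (by fun_prop)
  · have hev : ∀ᶠ y : ℝ in nhdsWithin 0 {0}ᶜ, |y| ≤ 1 := by
      refine nhdsWithin_le_nhds ?_
      filter_upwards [Metric.closedBall_mem_nhds (0 : ℝ) one_pos] with y hy
      simpa using hy
    filter_upwards [hev, self_mem_nhdsWithin] with y hy hy0
    refine Eventually.of_forall fun x => ?_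
    have hy2 : 0 < y ^ 2 := by
      have : y ≠ 0 := hy0
      positivity
    rw [Real.norm_of_nonneg (by positivity), div_le_iff₀ hy2]
    have h := pow_le_pow_left₀ (abs_nonneg _) (hC x y hy) 2
    simp only [sq_abs, mul_pow] at h
    exact h
  · have h := (hasDerivAt_iff_tendsto_slope_zero.1
      (f.differentiableAt (x := x)).hasDerivAt).pow 2
    refine h.congr fun y => ?_
    rw [smul_eq_mul, mul_pow, inv_pow, div_eq_inv_mul]

end SchwartzMap

theorem strip_jump_form_cosh_sub_one_limit (f : SchwartzMap ℝ ℝ) :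
    Filter.Tendsto
      (fun ℓ : ℝ =>
        ℓ ^ (-3 : ℤ) * ∫ y : ℝ, ∫ x : ℝ, (f (x + y) - f x) ^ 2 / (Real.cosh (y / ℓ) - 1))
      (nhdsWithin 0 (Set.Ioi 0))
      (nhds ((4 * π ^ 2 / 3) * ∫ x : ℝ, (deriv (⇑f) x) ^ 2)) := by
  set G : ℝ → ℝ := fun y => ∫ x, (f (x + y) - f x) ^ 2
  have hGmeas : StronglyMeasurable G := by
    have := f.continuous
    refine StronglyMeasurable.integral_prod_right (f := fun y x => (f (x + y) - f x) ^ 2) ?_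
    exact Continuous.stronglyMeasurable (by fun_prop)
  obtain ⟨K, hK⟩ := f.exists_integral_sub_sq_le
  have hlim : Tendsto (fun ℓ : ℝ => ∫ u, G (ℓ * u) / ℓ ^ 2 / (Real.cosh u - 1))
      (nhdsWithin 0 (Set.Ioi 0))
      (nhds (∫ u : ℝ, (∫ x, (deriv (⇑f) x) ^ 2) * (u ^ 2 / (Real.cosh u - 1)))) := by
    refine tendsto_integral_filter_of_dominated_convergence
      (fun u => K * (u ^ 2 / (Real.cosh u - 1))) (Eventually.of_forall fun ℓ => ?_) ?_
      (integrable_sq_div_cosh_sub_one.const_mul _) ?_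
    · have h1 : Measurable fun u => G (ℓ * u) :=
        hGmeas.measurable.comp (measurable_const_mul ℓ)
      exact ((h1.div_const _).div
        (Real.measurable_cosh.sub_const 1)).aestronglyMeasurable
    · filter_upwards [self_mem_nhdsWithin] with ℓ hℓ
      have hℓ' : 0 < ℓ := hℓ
      refine Eventually.of_forall fun u => ?_
      have hG0 : 0 ≤ G (ℓ * u) := integral_nonneg fun x => sq_nonneg _
      have hc : 0 ≤ Real.cosh u - 1 := sub_nonneg.2 (Real.one_le_cosh u)
      rw [Real.norm_of_nonneg (by positivity), ← mul_div_assoc]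
      refine div_le_div_of_nonneg_right ?_ hc
      rw [div_le_iff₀ (by positivity)]
      calc G (ℓ * u) ≤ K * (ℓ * u) ^ 2 := hK _
        _ = K * u ^ 2 * ℓ ^ 2 := by ring
    · have hne : ∀ᵐ u : ℝ, u ≠ 0 := by
        simp [ae_iff]
      filter_upwards [hne] with u hu
      have hscale : Tendsto (fun ℓ : ℝ => ℓ * u) (nhdsWithin 0 (Set.Ioi 0))
          (nhdsWithin 0 {0}ᶜ) := by
        refine tendsto_nhdsWithin_iff.2 ⟨?_, ?_⟩
        · have : Tendsto (fun ℓ : ℝ => ℓ * u) (nhds 0) (nhds (0 * u)) :=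
            (continuous_mul_const u).tendsto 0
          rw [zero_mul] at this
          exact this.mono_left nhdsWithin_le_nhds
        · filter_upwards [self_mem_nhdsWithin] with ℓ hℓ
          exact mul_ne_zero (ne_of_gt hℓ) hu
      refine ((f.tendsto_integral_sub_sq_div.comp hscale).mul_const
        (u ^ 2 / (Real.cosh u - 1))).congr fun ℓ => ?_
      change G (ℓ * u) / (ℓ * u) ^ 2 * (u ^ 2 / (Real.cosh u - 1)) = _
      rw [mul_pow, ← mul_div_assoc, div_mul_eq_mul_div,
        mul_div_mul_right _ _ (pow_ne_zero 2 hu)]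
  rw [integral_const_mul, integral_sq_div_cosh_sub_one, mul_comm] at hlim
  refine hlim.congr' ?_
  filter_upwards [self_mem_nhdsWithin] with ℓ hℓ
  have hℓ' : 0 < ℓ := hℓ
  have hsub := Measure.integral_comp_mul_left (fun y => G y / (Real.cosh (y / ℓ) - 1)) ℓ
  simp only [mul_div_cancel_left₀ _ hℓ'.ne', abs_of_pos (inv_pos.2 hℓ'), smul_eq_mul] at hsub
  simp only [integral_div]
  simp only [div_right_comm _ (ℓ ^ 2)]
  rw [integral_div, hsub]
  change _ = ℓ ^ (-3 : ℤ) * ∫ y, G y / (Real.cosh (y / ℓ) - 1)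
  rw [zpow_neg]
  norm_cast
  field_simp
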